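/- Let R be an algebra, α an automorphism of R, δ an α-derivation, and A = R[t; α, δ]. Suppose right-gldim R = n < ∞. Then for every right A-module M there is a short exact sequence of right A-modules 0 → M_α ⊗_R A → M ⊗_R A → M → 0, where the second map sends m ⊗ a to m·a, and consequently right-gldim A ≤ right-gldim R + 1. -/

import Mathlib

universe u

/-- `pdLE R n M` : the projective dimension of the `R`-module `M` is at most `n`. -/
def pdLE (R : Type u) [Ring R] :
    ℕ → (M : Type u) → (i : AddCommGroup M) → @Module R M _ i.toAddCommMonoid → Prop
  | 0, M, i, j => letI := i; letI := j; Module.Projective R M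
  | n + 1, M, i, j => letI := i; letI := j;
      ∃ (ι : Type u) (f : (ι →₀ R) →ₗ[R] M), Function.Surjective f ∧
        pdLE R n (LinearMap.ker f) inferInstance inferInstance

/-- The projective dimension of `M` over `R`, valued in `ℕ∞`. -/
noncomputable def projDim (R : Type u) [Ring R]
    (M : Type u) (i : AddCommGroup M) (j : @Module R M _ i.toAddCommMonoid) : ℕ∞ :=
  sInf {d : ℕ∞ | ∃ n : ℕ, d = n ∧ pdLE R n M i j}

/-- The right global dimension of a ring `R`. -/
noncomputable def rightGlobalDim (R : Type u) [Ring R] : ℕ∞ :=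
  sSup {d : ℕ∞ | ∃ (M : Type u) (i : AddCommGroup M)
    (j : @Module Rᵐᵒᵖ M _ i.toAddCommMonoid), d = projDim Rᵐᵒᵖ M i j}

/-- `A` (with embedding `ι` and distinguished element `t`) is the Ore extension
`R[t; α, δ]`. -/
structure IsOreExtension (k : Type u) [Field k] (R : Type u) [Ring R] [Algebra k R]
    (α : R → R) (δ : R → R)
    (A : Type u) [Ring A] [Algebra k A] (ι : R →ₐ[k] A) (t : A) : Prop where
  rel : ∀ r : R, t * ι r = ι (α r) * t + ι (δ r)
  repr : ∀ a : A, ∃! c : ℕ →₀ R, a = c.sum fun i r => ι r * t ^ i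

/-- `T` (with biadditive `τ`) is the tensor product `M_β ⊗_R A`, where `M` is a right
`A`-module regarded as a right `R`-module via `r ↦ β r ∈ A`, and `A` is a left
`R`-module via `η`. -/
structure IsModuleTensor (R A : Type u) [Ring R] [Ring A] (η β : R → A)
    (M : Type u) [AddCommGroup M] [Module Aᵐᵒᵖ M]
    (T : Type u) [AddCommGroup T] (τ : M →+ A →+ T) : Prop where
  balanced : ∀ (m : M) (r : R) (a : A),
    τ (MulOpposite.op (β r) • m) a = τ m (η r * a)
  universal : ∀ (C : Type u) [AddCommGroup C] (g : M →+ A →+ C),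
      (∀ (m : M) (r : R) (a : A), g (MulOpposite.op (β r) • m) a = g m (η r * a)) →
      ∃! φ : T →+ C, ∀ m a, φ (τ m a) = g m a

section pd

open CategoryTheory

theorem pdLE_iff (R : Type u) [Ring R] (n : ℕ) (M : Type u) [i : AddCommGroup M] [j : Module R M] :
    pdLE R n M i j ↔ HasProjectiveDimensionLE (ModuleCat.of R M) n := by
  induction n generalizing M with
  | zero =>
    rw [← projective_iff_hasProjectiveDimensionLE_zero, ← IsProjective.iff_projective]
    rfl
  | succ n ih =>
    constructor
    · rintro ⟨κ, f, hf, h⟩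
      have h' := (ih _).1 h
      have hS := LinearMap.shortExact_shortComplexKer hf
      have : Projective (ModuleCat.of R (κ →₀ R)) :=
        (IsProjective.iff_projective _).1 inferInstance
      exact (hS.hasProjectiveDimensionLT_X₃_iff n this).2 h'
    · intro h
      have hf : Function.Surjective (Finsupp.linearCombination R (id : M → M)) := by
        intro m
        exact ⟨Finsupp.single m 1, by simp⟩
      refine ⟨M, Finsupp.linearCombination R (id : M → M), hf, (ih _).2 ?_⟩
      have hS := LinearMap.shortExact_shortComplexKer hf
      have : Projective (ModuleCat.of R (M →₀ R)) :=
        (IsProjective.iff_projective _).1 inferInstance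
      exact (hS.hasProjectiveDimensionLT_X₃_iff n this).1 h

theorem pd_X3 {R : Type u} [Ring R] {X Y Z : Type u} [AddCommGroup X] [AddCommGroup Y]
    [AddCommGroup Z] [Module R X] [Module R Y] [Module R Z] (f : X →ₗ[R] Y) (g : Y →ₗ[R] Z)
    (hf : Function.Injective f) (hg : Function.Surjective g)
    (h : LinearMap.range f = LinearMap.ker g) (n : ℕ)
    (hX : HasProjectiveDimensionLE (ModuleCat.of R X) n)
    (hY : HasProjectiveDimensionLE (ModuleCat.of R Y) n) :
    HasProjectiveDimensionLE (ModuleCat.of R Z) (n + 1) := by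
  have he : Function.Exact f g := LinearMap.exact_iff.2 h.symm
  have hS := ModuleCat.shortComplex_shortExact
    (ModuleCat.shortComplexOfCompEqZero f g he.linearMap_comp_eq_zero) he hf hg
  exact hS.hasProjectiveDimensionLT_X₃ (n + 1) hX
    (hasProjectiveDimensionLT_of_ge (ModuleCat.of R Y) (n + 1) (n + 1 + 1) (by omega))

theorem gldim_iff (R : Type u) [Ring R] (n : ℕ) :
    rightGlobalDim R ≤ n ↔ ∀ (M : Type u) [AddCommGroup M] [Module Rᵐᵒᵖ M],
      HasProjectiveDimensionLE (ModuleCat.of Rᵐᵒᵖ M) n := by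
  constructor
  · intro h M i j
    have h0 : projDim Rᵐᵒᵖ M i j ≤ rightGlobalDim R := by
      unfold rightGlobalDim
      exact le_sSup ⟨M, i, j, rfl⟩
    have h1 : projDim Rᵐᵒᵖ M i j ≤ n := le_trans h0 h
    have hlt : projDim Rᵐᵒᵖ M i j < ((n + 1 : ℕ) : ℕ∞) :=
      lt_of_le_of_lt h1 (by exact_mod_cast Nat.lt_succ_self n)
    obtain ⟨d, ⟨m, rfl, hm⟩, hd⟩ := sInf_lt_iff.1 hlt
    have hmn : m < n + 1 := by exact_mod_cast hd
    have := (pdLE_iff _ _ _).1 hm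
    exact hasProjectiveDimensionLT_of_ge (ModuleCat.of Rᵐᵒᵖ M) (m + 1) (n + 1) (by omega)
  · intro h
    apply sSup_le
    rintro d ⟨M, i, j, rfl⟩
    exact sInf_le ⟨n, rfl, (pdLE_iff _ _ _).2 (h M)⟩

end pd

section ore

open MulOpposite

variable {k R A : Type u} [Field k] [Ring R] [Algebra k R] [Ring A] [Algebra k A]
  {α δ : R → R} {ι : R →ₐ[k] A} {t : A}

/-- From coefficients to the Ore extension. -/
noncomputable def ofCf (ι : R →ₐ[k] A) (t : A) : (ℕ →₀ R) →+ A :=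
  Finsupp.liftAddHom fun i => (AddMonoidHom.mulRight (t ^ i)).comp (ι : R →+ A)

theorem ofCf_single (ι : R →ₐ[k] A) (t : A) (i : ℕ) (r : R) :
    ofCf ι t (Finsupp.single i r) = ι r * t ^ i := by
  simp [ofCf]

theorem ofCf_bij (hA : IsOreExtension k R α δ A ι t) : Function.Bijective (ofCf ι t) := by
  have key : ∀ c : ℕ →₀ R, ofCf ι t c = c.sum fun i r => ι r * t ^ i := fun c => rfl
  constructor
  · intro c d h
    obtain ⟨e, _, he⟩ := hA.repr (ofCf ι t c)
    rw [he c (key c), he d (h.trans (key d))]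
  · intro a
    obtain ⟨e, he, _⟩ := hA.repr a
    exact ⟨e, (key e).trans he.symm⟩

/-- The coefficients. -/
noncomputable def cf (hA : IsOreExtension k R α δ A ι t) : A ≃+ (ℕ →₀ R) :=
  (AddEquiv.ofBijective (ofCf ι t) (ofCf_bij hA)).symm

theorem cf_mono (hA : IsOreExtension k R α δ A ι t) (i : ℕ) (r : R) :
    cf hA (ι r * t ^ i) = Finsupp.single i r := by
  rw [← ofCf_single]
  exact (AddEquiv.ofBijective (ofCf ι t) (ofCf_bij hA)).symm_apply_apply _

theorem ore_hom_ext (hA : IsOreExtension k R α δ A ι t) {C : Type*} [AddCommGroup C]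
    (f g : A →+ C) (h : ∀ i r, f (ι r * t ^ i) = g (ι r * t ^ i)) : f = g := by
  have : f.comp (ofCf ι t) = g.comp (ofCf ι t) := by
    ext i r
    simpa [ofCf_single] using h i r
  ext a
  obtain ⟨c, rfl⟩ := (ofCf_bij hA).2 a
  exact DFunLike.congr_fun this c

variable {N : Type u} [AddCommGroup N] [Module Rᵐᵒᵖ N]

/-- The universal biadditive map. -/
noncomputable def tauN (hA : IsOreExtension k R α δ A ι t) (N : Type u) [AddCommGroup N]
    [Module Rᵐᵒᵖ N] : N →+ A →+ (ℕ →₀ N) :=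
  AddMonoidHom.mk' (fun n => (Finsupp.mapRange.addMonoidHom
      (AddMonoidHom.mk' (fun r : R => op r • n) (fun a b => by rw [op_add, add_smul]))).comp
      (cf hA : A →+ (ℕ →₀ R))) (by
    intro a b
    ext x i
    simp)

theorem tauN_mono (hA : IsOreExtension k R α δ A ι t) (n : N) (i : ℕ) (r : R) :
    tauN hA N n (ι r * t ^ i) = Finsupp.single i (op r • n) := by
  simp [tauN, cf_mono]

theorem tauN_pow (hA : IsOreExtension k R α δ A ι t) (n : N) (i : ℕ) :
    tauN hA N n (t ^ i) = Finsupp.single i n := by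
  have := tauN_mono hA n i 1
  simpa using this

theorem tauN_balanced (hA : IsOreExtension k R α δ A ι t) (n : N) (r : R) (a : A) :
    tauN hA N (op r • n) a = tauN hA N n (ι r * a) := by
  have : tauN hA N (op r • n) = (tauN hA N n).comp (AddMonoidHom.mulLeft (ι r)) := by
    apply ore_hom_ext hA
    intro i s
    rw [tauN_mono, AddMonoidHom.comp_apply, AddMonoidHom.coe_mulLeft, ← mul_assoc, ← map_mul,
      tauN_mono, smul_smul, op_mul]
  exact DFunLike.congr_fun this a

/-- Extension of a biadditive map. -/
noncomputable def liftN {N A C : Type*} [AddCommGroup N] [Ring A] [AddCommGroup C] (t : A)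
    (g : N →+ A →+ C) : (ℕ →₀ N) →+ C :=
  Finsupp.liftAddHom fun i => g.flip (t ^ i)

theorem liftN_single {N A C : Type*} [AddCommGroup N] [Ring A] [AddCommGroup C] (t : A)
    (g : N →+ A →+ C) (i : ℕ) (n : N) : liftN t g (Finsupp.single i n) = g n (t ^ i) := by
  simp [liftN]

theorem liftN_tauN (hA : IsOreExtension k R α δ A ι t) {C : Type*} [AddCommGroup C]
    (g : N →+ A →+ C) (hg : ∀ n r a, g (op r • n) a = g n (ι r * a)) (n : N) (a : A) :
    liftN t g (tauN hA N n a) = g n a := by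
  have : (liftN t g).comp (tauN hA N n) = g n := by
    apply ore_hom_ext hA
    intro i r
    rw [AddMonoidHom.comp_apply, tauN_mono, liftN_single, hg]
  exact DFunLike.congr_fun this a

/-- The induced module `N ⊗_R A`. -/
def OInd (_hA : IsOreExtension k R α δ A ι t) (N : Type u) [AddCommGroup N] [Module Rᵐᵒᵖ N] :
    Type u := ℕ →₀ N

noncomputable instance (hA : IsOreExtension k R α δ A ι t) : AddCommGroup (OInd hA N) :=
  inferInstanceAs (AddCommGroup (ℕ →₀ N))

/-- Precompose the second variable with right multiplication. -/
noncomputable def shiftR {N A C : Type*} [AddCommGroup N] [Ring A] [AddCommGroup C]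
    (g : N →+ A →+ C) (b : A) : N →+ A →+ C :=
  AddMonoidHom.mk' (fun n => (g n).comp (AddMonoidHom.mulRight b)) (by
    intro x y; ext z; simp)

theorem shiftR_apply {N A C : Type*} [AddCommGroup N] [Ring A] [AddCommGroup C]
    (g : N →+ A →+ C) (b : A) (n : N) (a : A) : shiftR g b n a = g n (a * b) := rfl

/-- The action. -/
noncomputable def actN (hA : IsOreExtension k R α δ A ι t) (N : Type u) [AddCommGroup N]
    [Module Rᵐᵒᵖ N] (b : A) : (ℕ →₀ N) →+ (ℕ →₀ N) :=
  liftN t (shiftR (tauN hA N) b)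

theorem actN_single (hA : IsOreExtension k R α δ A ι t) (b : A) (i : ℕ) (n : N) :
    actN hA N b (Finsupp.single i n) = tauN hA N n (t ^ i * b) := by
  rw [actN, liftN_single, shiftR_apply]

theorem actN_tauN (hA : IsOreExtension k R α δ A ι t) (b : A) (n : N) (a : A) :
    actN hA N b (tauN hA N n a) = tauN hA N n (a * b) := by
  rw [actN, liftN_tauN hA _ _, shiftR_apply]
  intro n r a
  rw [shiftR_apply, shiftR_apply, tauN_balanced, mul_assoc]

theorem actN_one (hA : IsOreExtension k R α δ A ι t) :
    actN hA N 1 = AddMonoidHom.id _ := by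
  apply Finsupp.addHom_ext
  intro i n
  rw [actN_single, mul_one, tauN_pow]; rfl

theorem actN_mul (hA : IsOreExtension k R α δ A ι t) (a b : A) :
    actN hA N (a * b) = (actN hA N b).comp (actN hA N a) := by
  apply Finsupp.addHom_ext
  intro i n
  rw [AddMonoidHom.comp_apply, actN_single, actN_single, actN_tauN, mul_assoc]

theorem actN_add (hA : IsOreExtension k R α δ A ι t) (a b : A) :
    actN hA N (a + b) = actN hA N a + actN hA N b := by
  apply Finsupp.addHom_ext
  intro i n
  rw [AddMonoidHom.add_apply, actN_single, actN_single, actN_single, mul_add, map_add]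

theorem actN_zero (hA : IsOreExtension k R α δ A ι t) :
    actN hA N 0 = 0 := by
  apply Finsupp.addHom_ext
  intro i n
  rw [actN_single, mul_zero, map_zero, AddMonoidHom.zero_apply]

noncomputable instance (hA : IsOreExtension k R α δ A ι t) : Module Aᵐᵒᵖ (OInd hA N) where
  smul b x := actN hA N b.unop x
  one_smul x := DFunLike.congr_fun (actN_one hA) x
  mul_smul a b x := DFunLike.congr_fun (actN_mul hA b.unop a.unop) x
  smul_zero a := map_zero (actN hA N a.unop)
  smul_add a x y := map_add (actN hA N a.unop) x y
  add_smul a b x := DFunLike.congr_fun (actN_add hA a.unop b.unop) x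
  zero_smul x := DFunLike.congr_fun (actN_zero hA) x

theorem OInd_smul_def (hA : IsOreExtension k R α δ A ι t) (b : Aᵐᵒᵖ) (x : OInd hA N) :
    b • x = actN hA N b.unop x := rfl

theorem OInd_smul_tau (hA : IsOreExtension k R α δ A ι t) (n : N) (a b : A) :
    op b • (show OInd hA N from tauN hA N n a) = tauN hA N n (a * b) :=
  actN_tauN hA b n a

/-- Functoriality of induction. -/
noncomputable def OInd.map (hA : IsOreExtension k R α δ A ι t) {N' : Type u} [AddCommGroup N']
    [Module Rᵐᵒᵖ N'] (f : N →ₗ[Rᵐᵒᵖ] N') : OInd hA N →ₗ[Aᵐᵒᵖ] OInd hA N' where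
  toFun x := Finsupp.mapRange.addMonoidHom (ι := ℕ) f.toAddMonoidHom x
  map_add' x y := map_add (Finsupp.mapRange.addMonoidHom (ι := ℕ) f.toAddMonoidHom) x y
  map_smul' b x := by
    have h1 : ∀ n a, Finsupp.mapRange.addMonoidHom (ι := ℕ) f.toAddMonoidHom (tauN hA N n a)
        = tauN hA N' (f n) a := by
      intro n a
      ext i
      simp [tauN]
    have : (Finsupp.mapRange.addMonoidHom (ι := ℕ) f.toAddMonoidHom).comp (actN hA N b.unop)
      = (actN hA N' b.unop).comp (Finsupp.mapRange.addMonoidHom (ι := ℕ) f.toAddMonoidHom) := by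
      apply Finsupp.addHom_ext
      intro i n
      rw [AddMonoidHom.comp_apply, AddMonoidHom.comp_apply, actN_single, h1]
      simp [actN_single]
    exact DFunLike.congr_fun this x

theorem OInd.map_apply (hA : IsOreExtension k R α δ A ι t) {N' : Type u} [AddCommGroup N']
    [Module Rᵐᵒᵖ N'] (f : N →ₗ[Rᵐᵒᵖ] N') (x : ℕ →₀ N) :
    OInd.map hA f x = Finsupp.mapRange f (map_zero f) x := rfl

theorem OInd_projective (hA : IsOreExtension k R α δ A ι t) [Module.Projective Rᵐᵒᵖ N] :
    Module.Projective Aᵐᵒᵖ (OInd hA N) := by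
  apply Module.Projective.of_lifting_property
  intro X Y _ _ _ _ f g hf
  let q : Rᵐᵒᵖ →+* Aᵐᵒᵖ := (ι : R →+* A).op
  let _ : Module Rᵐᵒᵖ X := Module.compHom X q
  let _ : Module Rᵐᵒᵖ Y := Module.compHom Y q
  have sX : ∀ (r : R) (x : X), op r • x = op (ι r) • x := fun r x => rfl
  have sY : ∀ (r : R) (x : Y), op r • x = op (ι r) • x := fun r x => rfl
  let f' : X →ₗ[Rᵐᵒᵖ] Y :=
    { toFun := f, map_add' := map_add f, map_smul' := fun r x => map_smul f (q r) x }
  have hs : ∀ (n : N) (a : A), op a • (show OInd hA N from Finsupp.single 0 n)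
      = tauN hA N n a := by
    intro n a
    rw [OInd_smul_def, unop_op]
    refine (actN_single hA a 0 n).trans ?_
    rw [pow_zero, one_mul]
  let g' : N →ₗ[Rᵐᵒᵖ] Y :=
    { toFun := fun n => g (show OInd hA N from Finsupp.single 0 n)
      map_add' := fun x y => by
        rw [← map_add]
        exact congrArg g (Finsupp.single_add 0 x y)
      map_smul' := fun r n => by
        obtain ⟨r, rfl⟩ := op_surjective r
        rw [RingHom.id_apply, sY, ← map_smul, hs]
        congr 1
        have := tauN_mono hA n 0 r
        rw [pow_zero, mul_one] at this
        exact this.symm }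
  obtain ⟨h', hh⟩ := Module.projective_lifting_property f' g' hf
  let G : N →+ A →+ X := AddMonoidHom.mk' (fun n => AddMonoidHom.mk' (fun a => op a • h' n)
    (fun a b => by rw [op_add, add_smul])) (fun x y => by ext a; simp)
  have hG : ∀ n a, G n a = op a • h' n := fun _ _ => rfl
  have hGb : ∀ n r a, G (op r • n) a = G n (ι r * a) := by
    intro n r a
    rw [hG, hG, map_smul, sX, smul_smul, op_mul]
  let H : OInd hA N →ₗ[Aᵐᵒᵖ] X :=
    { toFun := fun x => liftN t G x
      map_add' := fun x y => map_add (liftN t G) x y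
      map_smul' := fun b x => by
        obtain ⟨b, rfl⟩ := op_surjective b
        have : (liftN t G).comp (actN hA N b) = (DistribSMul.toAddMonoidHom X (op b)).comp
            (liftN t G) := by
          apply Finsupp.addHom_ext
          intro i n
          rw [AddMonoidHom.comp_apply, AddMonoidHom.comp_apply, actN_single, liftN_tauN hA G hGb,
            liftN_single, hG, hG, DistribSMul.toAddMonoidHom_apply, smul_smul, op_mul]
        exact DFunLike.congr_fun this x }
  refine ⟨H, ?_⟩
  have : f.toAddMonoidHom.comp (liftN t G) =
      (show (ℕ →₀ N) →+ Y from g.toAddMonoidHom) := by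
    apply Finsupp.addHom_ext
    intro i n
    rw [AddMonoidHom.comp_apply, liftN_single, hG]
    change f (op (t ^ i) • h' n) = g (show OInd hA N from Finsupp.single i n)
    rw [map_smul]
    have e1 : f (h' n) = g (show OInd hA N from Finsupp.single 0 n) :=
      LinearMap.congr_fun hh n
    rw [e1, ← map_smul, hs, tauN_pow]
  ext x
  exact DFunLike.congr_fun this x

open CategoryTheory in
theorem OInd_pd (hA : IsOreExtension k R α δ A ι t) (n : ℕ) (N : Type u) [i : AddCommGroup N]
    [j : Module Rᵐᵒᵖ N] (h : pdLE Rᵐᵒᵖ n N i j) :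
    HasProjectiveDimensionLE (ModuleCat.of Aᵐᵒᵖ (OInd hA N)) n := by
  induction n generalizing N with
  | zero =>
    rw [← projective_iff_hasProjectiveDimensionLE_zero, ← IsProjective.iff_projective]
    have : Module.Projective Rᵐᵒᵖ N := h
    exact OInd_projective hA
  | succ n ih =>
    obtain ⟨κ, f, hf, h⟩ := h
    have hK := ih _ h
    have hP : HasProjectiveDimensionLE (ModuleCat.of Aᵐᵒᵖ (OInd hA (κ →₀ Rᵐᵒᵖ))) n := by
      have : HasProjectiveDimensionLE (ModuleCat.of Aᵐᵒᵖ (OInd hA (κ →₀ Rᵐᵒᵖ))) 0 := by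
        rw [← projective_iff_hasProjectiveDimensionLE_zero, ← IsProjective.iff_projective]
        exact OInd_projective hA
      exact hasProjectiveDimensionLT_of_ge _ 1 (n + 1) (by omega)
    refine pd_X3 (OInd.map hA (LinearMap.ker f).subtype) (OInd.map hA f) ?_ ?_ ?_ n hK hP
    · exact Finsupp.mapRange_injective (LinearMap.ker f).subtype (map_zero _)
        (LinearMap.ker f).injective_subtype
    · exact Finsupp.mapRange_surjective f (map_zero _) hf
    · ext x
      constructor
      · rintro ⟨y, rfl⟩
        rw [LinearMap.mem_ker]
        apply Finsupp.ext
        intro i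
        exact ((show ℕ →₀ LinearMap.ker f from y) i).2
      · intro hx
        obtain ⟨x, rfl⟩ : ∃ z : ℕ →₀ (κ →₀ Rᵐᵒᵖ), (show OInd hA (κ →₀ Rᵐᵒᵖ) from z) = x := ⟨x, rfl⟩
        have hx' : ∀ i, f (x i) = 0 := fun i =>
          DFunLike.congr_fun (show Finsupp.mapRange f (map_zero f) x = 0 from hx) i
        let z : ℕ →₀ LinearMap.ker f := Finsupp.onFinset x.support (fun i => ⟨x i, hx' i⟩) (by
          intro i hi
          rw [Finsupp.mem_support_iff]
          intro h0
          exact hi (Subtype.ext h0))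
        refine ⟨z, ?_⟩
        apply Finsupp.ext
        intro i
        rfl

/-- Restriction of scalars along `f`. -/
def Tw (_f : R →+* A) (M : Type u) : Type u := M

instance (f : R →+* A) (M : Type u) [i : AddCommGroup M] : AddCommGroup (Tw f M) := i

instance (f : R →+* A) (M : Type u) [AddCommGroup M] [Module Aᵐᵒᵖ M] :
    Module Rᵐᵒᵖ (Tw f M) := Module.compHom M f.op

theorem IsModuleTensor.hom_ext {η β : R → A} {M : Type u} [AddCommGroup M] [Module Aᵐᵒᵖ M]
    {T : Type u} [AddCommGroup T] {τ : M →+ A →+ T} (h : IsModuleTensor R A η β M T τ)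
    {C : Type u} [AddCommGroup C] (f g : T →+ C) (hfg : ∀ m a, f (τ m a) = g (τ m a)) :
    f = g := by
  obtain ⟨φ, _, hφ⟩ := h.universal C (AddMonoidHom.mk' (fun m => g.comp (τ m))
    (fun x y => by ext; simp)) (fun m r a => by
      simp only [AddMonoidHom.mk'_apply, AddMonoidHom.comp_apply]
      rw [h.balanced])
  rw [hφ f (fun m a => hfg m a), hφ g (fun m a => rfl)]

theorem IsModuleTensor.bij (hA : IsOreExtension k R α δ A ι t) (γ : R →+* A)
    {M : Type u} [AddCommGroup M] [Module Aᵐᵒᵖ M]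
    {T : Type u} [AddCommGroup T] {τ : M →+ A →+ T}
    (h : IsModuleTensor R A (fun r => ι r) (fun r => γ r) M T τ) :
    Function.Bijective (liftN t τ) := by
  obtain ⟨φ, hφ, _⟩ := h.universal (ℕ →₀ M) (tauN hA (Tw γ M))
    (fun m r a => tauN_balanced hA (N := Tw γ M) m r a)
  have h1 : φ.comp (liftN t τ) = AddMonoidHom.id _ := by
    apply Finsupp.addHom_ext
    intro i m
    rw [AddMonoidHom.comp_apply, liftN_single, hφ]
    exact tauN_pow hA (N := Tw γ M) m i
  have h2 : (liftN t τ).comp φ = AddMonoidHom.id _ := by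
    apply h.hom_ext
    intro m a
    rw [AddMonoidHom.comp_apply, hφ]
    exact liftN_tauN hA (N := Tw γ M) τ (fun m r a => h.balanced m r a) m a
  exact ⟨Function.LeftInverse.injective (DFunLike.congr_fun h1),
    Function.RightInverse.surjective (DFunLike.congr_fun h2)⟩

theorem OInd_isTensor (hA : IsOreExtension k R α δ A ι t) (γ : R →+* A)
    (M : Type u) [AddCommGroup M] [Module Aᵐᵒᵖ M] :
    IsModuleTensor R A (fun r => ι r) (fun r => γ r) M (OInd hA (Tw γ M)) (tauN hA (Tw γ M)) where
  balanced m r a := tauN_balanced hA (N := Tw γ M) m r a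
  universal C _ g hg := by
    refine ⟨liftN (N := Tw γ M) t g, fun m a => liftN_tauN hA (N := Tw γ M) g hg m a, ?_⟩
    intro φ hφ
    apply Finsupp.addHom_ext (M := Tw γ M)
    intro i m
    refine Eq.trans ?_ (liftN_single (N := Tw γ M) t g i m).symm
    exact (congrArg φ (tauN_pow hA (N := Tw γ M) m i).symm).trans (hφ m (t ^ i))

end ore

section ses

open MulOpposite

theorem ore_ses {k R A : Type u} [Field k] [Ring R] [Algebra k R] [Ring A] [Algebra k A]
    (α : R ≃ₐ[k] R) (δ : R →ₗ[k] R)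
    (ι : R →ₐ[k] A) (t : A) (hA : IsOreExtension k R α δ A ι t)
    (M : Type u) [AddCommGroup M] [Module Aᵐᵒᵖ M]
      (T₁ : Type u) [AddCommGroup T₁] [Module Aᵐᵒᵖ T₁] (τ₁ : M →+ A →+ T₁)
      (h₁ : IsModuleTensor R A (fun r => ι r) (fun r => ι (α r)) M T₁ τ₁)
      (s₁ : ∀ (m : M) (a b : A), MulOpposite.op b • τ₁ m a = τ₁ m (a * b))
      (T₂ : Type u) [AddCommGroup T₂] [Module Aᵐᵒᵖ T₂] (τ₂ : M →+ A →+ T₂)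
      (h₂ : IsModuleTensor R A (fun r => ι r) (fun r => ι r) M T₂ τ₂)
      (s₂ : ∀ (m : M) (a b : A), MulOpposite.op b • τ₂ m a = τ₂ m (a * b)) :
      ∃ (jmap : T₁ →ₗ[Aᵐᵒᵖ] T₂) (p : T₂ →ₗ[Aᵐᵒᵖ] M),
        (∀ (m : M) (a : A),
          jmap (τ₁ m a) = τ₂ (MulOpposite.op t • m) a - τ₂ m (t * a)) ∧
        (∀ (m : M) (a : A), p (τ₂ m a) = MulOpposite.op a • m) ∧
        Function.Injective jmap ∧ Function.Surjective p ∧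
        LinearMap.range jmap = LinearMap.ker p := by
  obtain ⟨j, hj, -⟩ := h₁.universal T₂ (AddMonoidHom.mk' (fun m => τ₂ (op t • m) -
    (τ₂ m).comp (AddMonoidHom.mulLeft t)) (fun x y => by ext a; simp; abel)) (by
      intro m r a
      simp only [AddMonoidHom.mk'_apply, AddMonoidHom.sub_apply, AddMonoidHom.comp_apply,
        AddMonoidHom.coe_mulLeft]
      rw [smul_smul, ← op_mul, h₂.balanced m (α r), ← h₂.balanced (op t • m) r, smul_smul,
        ← op_mul, hA.rel, ← mul_assoc, ← mul_assoc, hA.rel]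
      rw [op_add, add_smul, add_mul, map_add, map_add, AddMonoidHom.add_apply, h₂.balanced m (δ r)]
      abel)
  obtain ⟨p, hp, -⟩ := h₂.universal M (AddMonoidHom.mk' (fun m => AddMonoidHom.mk'
    (fun a => op a • m) (fun a b => by rw [op_add, add_smul])) (fun x y => by ext a; simp)) (by
      intro m r a
      simp only [AddMonoidHom.mk'_apply]
      rw [smul_smul, op_mul])
  replace hj : ∀ (m : M) (a : A), j (τ₁ m a) = τ₂ (op t • m) a - τ₂ m (t * a) := hj
  replace hp : ∀ (m : M) (a : A), p (τ₂ m a) = op a • m := hp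
  let jl : T₁ →ₗ[Aᵐᵒᵖ] T₂ :=
    { j with
      map_smul' := fun b x => by
        have : j.comp (DistribSMul.toAddMonoidHom T₁ b) =
            (DistribSMul.toAddMonoidHom T₂ b).comp j := by
          apply h₁.hom_ext
          intro m a
          obtain ⟨b, rfl⟩ := op_surjective b
          simp only [AddMonoidHom.comp_apply, DistribSMul.toAddMonoidHom_apply]
          rw [s₁, hj, hj, smul_sub, s₂, s₂, mul_assoc]
        exact DFunLike.congr_fun this x }
  let pl : T₂ →ₗ[Aᵐᵒᵖ] M :=
    { p with
      map_smul' := fun b x => by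
        have : p.comp (DistribSMul.toAddMonoidHom T₂ b) =
            (DistribSMul.toAddMonoidHom M b).comp p := by
          apply h₂.hom_ext
          intro m a
          obtain ⟨b, rfl⟩ := op_surjective b
          simp only [AddMonoidHom.comp_apply, DistribSMul.toAddMonoidHom_apply]
          rw [s₂, hp, hp, smul_smul, op_mul]
        exact DFunLike.congr_fun this x }
  have hjl : ∀ x, jl x = j x := fun _ => rfl
  have hpl : ∀ x, pl x = p x := fun _ => rfl
  have b₁ := h₁.bij hA ((ι : R →+* A).comp (α : R →+* R))
  have b₂ := h₂.bij hA (ι : R →+* A)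
  refine ⟨jl, pl, hj, hp, ?_, ?_, ?_⟩
  · let J : (ℕ →₀ M) →+ (ℕ →₀ M) := Finsupp.liftAddHom fun i =>
      (Finsupp.singleAddHom i).comp (DistribSMul.toAddMonoidHom M (op t)) -
        Finsupp.singleAddHom (i + 1)
    have hJs : ∀ i m, J (Finsupp.single i m) =
        Finsupp.single i (op t • m) - Finsupp.single (i + 1) m := by
      intro i m; simp [J]
    have hJ : ∀ i x, J x (i + 1) = op t • x (i + 1) - x i := by
      intro i
      have : (Finsupp.applyAddHom (i + 1)).comp J =
          (DistribSMul.toAddMonoidHom M (op t)).comp (Finsupp.applyAddHom (i + 1)) -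
            Finsupp.applyAddHom i := by
        apply Finsupp.addHom_ext
        intro l m
        simp only [AddMonoidHom.comp_apply, AddMonoidHom.sub_apply, hJs,
          Finsupp.applyAddHom_apply, Finsupp.sub_apply, DistribSMul.toAddMonoidHom_apply,
          Finsupp.single_apply, smul_ite, smul_zero, Nat.add_right_cancel_iff]
      exact DFunLike.congr_fun this
    have hJinj : Function.Injective J := by
      rw [injective_iff_map_eq_zero]
      intro x hx
      have step : ∀ i, x (i + 1) = 0 → x i = 0 := by
        intro i hi
        have := hJ i x
        rw [hx, hi] at this
        simpa using this.symm
      obtain ⟨n, hn⟩ : ∃ n, ∀ i, n ≤ i → x i = 0 := by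
        refine ⟨x.support.sup id + 1, fun i hi => ?_⟩
        by_contra h
        have := Finset.le_sup (f := id) (Finsupp.mem_support_iff.2 h)
        simp only [id] at this
        omega
      have down : ∀ d i, x (i + d) = 0 → x i = 0 := by
        intro d
        induction d with
        | zero => intro i h; exact h
        | succ d ih => intro i h; exact ih i (step _ h)
      ext i
      exact down n i (hn _ (by omega))
    have comm : j.comp (liftN t τ₁) = (liftN t τ₂).comp J := by
      apply Finsupp.addHom_ext
      intro i m
      rw [AddMonoidHom.comp_apply, AddMonoidHom.comp_apply, hJs, map_sub, liftN_single,
        liftN_single, liftN_single, hj, pow_succ']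
    rw [injective_iff_map_eq_zero]
    intro x hx
    obtain ⟨y, rfl⟩ := b₁.2 x
    have : liftN t τ₂ (J y) = 0 := (DFunLike.congr_fun comm y).symm.trans hx
    have hy : y = 0 := hJinj (b₂.1 (by rw [this, map_zero, map_zero]))
    rw [hy, map_zero]
  · intro m
    exact ⟨τ₂ m 1, (hp m 1).trans (by simp)⟩
  · apply le_antisymm
    · rintro _ ⟨x, rfl⟩
      have : p.comp j = 0 := by
        apply h₁.hom_ext
        intro m a
        rw [AddMonoidHom.comp_apply, hj, map_sub, hp, hp, smul_smul, op_mul, sub_self,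
          AddMonoidHom.zero_apply]
      exact DFunLike.congr_fun this x
    · intro y hy
      have gen : ∀ (i : ℕ) (m : M), τ₂ m (t ^ i) - τ₂ (p (τ₂ m (t ^ i))) 1 ∈
          LinearMap.range jl := by
        intro i
        induction i with
        | zero =>
          intro m
          rw [hp]
          simp
        | succ i ih =>
          intro m
          have h3 := sub_mem (ih (op t • m)) (LinearMap.mem_range_self jl (τ₁ m (t ^ i)))
          rw [hjl, hj] at h3
          rw [hp, smul_smul, ← op_mul, ← pow_succ'] at h3
          rw [hp]
          convert h3 using 1
          abel
      have all : ∀ x : ℕ →₀ M, liftN t τ₂ x - τ₂ (p (liftN t τ₂ x)) 1 ∈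
          LinearMap.range jl := by
        intro x
        induction x using Finsupp.induction_linear with
        | zero => simp
        | add x y hx hy =>
          have := add_mem hx hy
          convert this using 1
          simp only [map_add, AddMonoidHom.add_apply]
          abel
        | single i m =>
          rw [liftN_single]
          exact gen i m
      obtain ⟨x, rfl⟩ := b₂.2 y
      have h0 : p (liftN t τ₂ x) = 0 := hy
      have := all x
      rw [h0] at this
      simpa using this

end ses

/-- Let `A = R[t; α, δ]` be an Ore extension with `α` an automorphism, and suppose
`R` has finite right global dimension.  Then for every right `A`-module `M` there is
a short exact sequence of right `A`-modules `0 → M_α ⊗_R A → M ⊗_R A → M → 0`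
(the first map `m ⊗ a ↦ m·t ⊗ a - m ⊗ t·a`, the second `m ⊗ a ↦ m·a`), and
consequently `right-gldim A ≤ right-gldim R + 1`. -/
theorem ore_ses_and_rightGlobalDim
    {k R A : Type u} [Field k] [Ring R] [Algebra k R] [Ring A] [Algebra k A]
    (α : R ≃ₐ[k] R) (δ : R →ₗ[k] R)
    (hδ : ∀ a b : R, δ (a * b) = δ a * b + α a * δ b)
    (ι : R →ₐ[k] A) (t : A) (hA : IsOreExtension k R α δ A ι t)
    (hfin : rightGlobalDim R ≠ ⊤) :
    (∀ (M : Type u) [AddCommGroup M] [Module Aᵐᵒᵖ M]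
      (T₁ : Type u) [AddCommGroup T₁] [Module Aᵐᵒᵖ T₁] (τ₁ : M →+ A →+ T₁),
      IsModuleTensor R A (fun r => ι r) (fun r => ι (α r)) M T₁ τ₁ →
      (∀ (m : M) (a b : A), MulOpposite.op b • τ₁ m a = τ₁ m (a * b)) →
      ∀ (T₂ : Type u) [AddCommGroup T₂] [Module Aᵐᵒᵖ T₂] (τ₂ : M →+ A →+ T₂),
      IsModuleTensor R A (fun r => ι r) (fun r => ι r) M T₂ τ₂ →
      (∀ (m : M) (a b : A), MulOpposite.op b • τ₂ m a = τ₂ m (a * b)) →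
      ∃ (jmap : T₁ →ₗ[Aᵐᵒᵖ] T₂) (p : T₂ →ₗ[Aᵐᵒᵖ] M),
        (∀ (m : M) (a : A),
          jmap (τ₁ m a) = τ₂ (MulOpposite.op t • m) a - τ₂ m (t * a)) ∧
        (∀ (m : M) (a : A), p (τ₂ m a) = MulOpposite.op a • m) ∧
        Function.Injective jmap ∧ Function.Surjective p ∧
        LinearMap.range jmap = LinearMap.ker p) ∧
    rightGlobalDim A ≤ rightGlobalDim R + 1 := by
  refine ⟨fun M _ _ T₁ _ _ τ₁ h₁ s₁ T₂ _ _ τ₂ h₂ s₂ =>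
    ore_ses α δ ι t hA M T₁ τ₁ h₁ s₁ T₂ τ₂ h₂ s₂, ?_⟩
  obtain ⟨n, hn⟩ := ENat.ne_top_iff_exists.1 hfin
  have hR := (gldim_iff R n).1 hn.ge
  rw [← hn]
  have goal : rightGlobalDim A ≤ ((n + 1 : ℕ) : ℕ∞) := by
    rw [gldim_iff]
    intro M _ _
    obtain ⟨j, p, -, -, hj, hp, hjp⟩ := ore_ses α δ ι t hA M _ _
      (OInd_isTensor hA ((ι : R →+* A).comp (α : R →+* R)) M)
      (fun m a b => OInd_smul_tau hA (N := Tw ((ι : R →+* A).comp (α : R →+* R)) M) m a b) _ _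
      (OInd_isTensor hA (ι : R →+* A) M)
      (fun m a b => OInd_smul_tau hA (N := Tw (ι : R →+* A) M) m a b)
    exact pd_X3 j p hj hp hjp n (OInd_pd hA n _ ((pdLE_iff _ _ _).2 (hR _)))
      (OInd_pd hA n _ ((pdLE_iff _ _ _).2 (hR _)))
  exact_mod_cast goal
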